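/- Let λ be the partition associated to a gap sequence G of genus g, let 0 ≤ k ≤ g−1, and let μ=(μ_1,...,μ_g) be any partition with μ_i = λ_i for all k+1 ≤ i ≤ g. Then ∂_{a^{(k)}_1}⋯∂_{a^{(k)}_{m_k}} s_μ(t), evaluated at t = [x_1]+⋯+[x_k], equals c_k · s_{(μ_1,...,μ_k)}([x_1]+⋯+[x_k]), where c_k ∈ {±1} is the sign of the permutation of (g−k−1, ..., 1, 0) given by the tuple (w_1^*, ..., w_{m_k}^*, w_{g−k−m_k}, ..., w_1). -/

import Mathlib

open MvPolynomial

/-- The polynomial `p_n(t)` defined by `exp(Σ_{n≥1} t_n k^n) = Σ_{n≥0} p_n(t) k^n`,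
as a polynomial in the variables `t_1, t_2, ...` (variable `X n` stands for `t_n`). -/
noncomputable def pS (n : ℕ) : MvPolynomial ℕ ℚ :=
  ∑ m ∈ Finset.range (n + 1), (Nat.factorial m : ℚ)⁻¹ •
    ∑ c ∈ Finset.univ.filter
        (fun c : Fin m → Fin (n + 1) =>
          (∑ j, ((c j : ℕ))) = n ∧ ∀ j, 1 ≤ (c j : ℕ)),
      ∏ j, X ((c j : ℕ))

/-- `p_n` for `n : ℤ`, with `p_n = 0` for `n < 0`. -/
noncomputable def pz (n : ℤ) : MvPolynomial ℕ ℚ :=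
  if 0 ≤ n then pS n.toNat else 0

/-- The Schur function `s_λ(t) = det(p_{λ_i - i + j})_{1 ≤ i,j ≤ l}` (here `0`-indexed). -/
noncomputable def schur {l : ℕ} (lam : Fin l → ℕ) : MvPolynomial ℕ ℚ :=
  Matrix.det (Matrix.of fun a b : Fin l =>
    pz ((lam a : ℤ) - ((a : ℕ) : ℤ) + ((b : ℕ) : ℤ)))

/-- Substitution `t_n ↦ (x_1^n + ⋯ + x_k^n)/n`, i.e. `t = [x_1] + ⋯ + [x_k]`. -/
noncomputable def toPowerSums (k : ℕ) (f : MvPolynomial ℕ ℚ) : MvPolynomial (Fin k) ℚ :=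
  aeval (fun n : ℕ => (n : ℚ)⁻¹ • ∑ i : Fin k, X i ^ n) f

/-- Iterated partial derivative `∂_{i_1} ⋯ ∂_{i_r}` for a list `L = [i_1, ..., i_r]`. -/
noncomputable def derivs (L : List ℕ) (f : MvPolynomial ℕ ℚ) : MvPolynomial ℕ ℚ :=
  L.foldr (fun i g => pderiv i g) f

/-- The entries of a partition `λ` padded by zeros (`0`-indexed). -/
def pad {l : ℕ} (lam : Fin l → ℕ) (a : ℕ) : ℕ := if h : a < l then lam ⟨a, h⟩ else 0

/-- `w_i`: the `(i+1)`-st smallest element of `G` (0-indexed: `wseq G 0 = w_1`). -/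
def wseq (G : Finset ℕ) (i : ℕ) : ℕ := (G.sort (· ≤ ·)).getD i 0

/-- `w_i^*`: the `(i+1)`-st smallest element of the complement of `G`
(0-indexed: `wstar G 0 = w_1^* = 0`). -/
noncomputable def wstar (G : Finset ℕ) (i : ℕ) : ℕ := Nat.nth (fun n => n ∉ G) i

/-- `m_k = #{i : w_i^* < g - k}`, the number of non-gaps below `g - k`. -/
def gapm (G : Finset ℕ) (g k : ℕ) : ℕ :=
  ((Finset.range (g - k)).filter (fun n => n ∉ G)).card

/-- `a^{(k)}_{j+1} = w_{g-k-j} - w_{j+1}^*` (0-indexed in `j`, `0 ≤ j < m_k`). -/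
noncomputable def gapa (G : Finset ℕ) (g k j : ℕ) : ℕ :=
  wseq G (g - k - j - 1) - wstar G j

/-- The partition associated to the gap sequence `G`:
`λ = (w_g, ..., w_1) - (g-1, ..., 1, 0)`, i.e. `λ_{a+1} = w_{g-a} - (g-1-a)` (0-indexed `a`). -/
def gapPart (G : Finset ℕ) (g a : ℕ) : ℕ := wseq G (g - 1 - a) - (g - 1 - a)

/-- The power series `Σ_{n≥1} t_n z^n`. -/
noncomputable def timeSeries : PowerSeries (MvPolynomial ℕ ℚ) :=
  PowerSeries.mk fun n => if n = 0 then 0 else X n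

/-- The `m`-th term `(Σ_{n≥1} t_n z^n)^m / m!` of the exponential of `timeSeries`. -/
noncomputable def expTerm (m : ℕ) : PowerSeries (MvPolynomial ℕ ℚ) :=
  (Nat.factorial m : ℚ)⁻¹ • timeSeries ^ m

/-- The generating series `Σ_n p_n z^n`. -/
noncomputable def pSeries : PowerSeries (MvPolynomial ℕ ℚ) := PowerSeries.mk pS

lemma coeff_timeSeries_pow (m n : ℕ) :
    PowerSeries.coeff n (timeSeries ^ m) =
      ∑ c ∈ Finset.univ.filter
        (fun c : Fin m → Fin (n + 1) =>
          (∑ j, ((c j : ℕ))) = n ∧ ∀ j, 1 ≤ (c j : ℕ)),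
      ∏ j, (X ((c j : ℕ)) : MvPolynomial ℕ ℚ) := by
  have hpow : timeSeries ^ m = ∏ _j : Fin m, timeSeries := by simp
  rw [hpow, PowerSeries.coeff_prod]
  symm
  refine Finset.sum_of_injOn
    (fun c : Fin m → Fin (n + 1) => Finsupp.equivFunOnFinite.symm fun j => (c j : ℕ))
    ?_ ?_ ?_ ?_
  · intro c _ d _ h
    funext j
    have := DFunLike.congr_fun h j
    simpa [Fin.ext_iff] using this
  · intro c hc
    simp only [Finset.coe_filter, Finset.mem_univ, true_and, Set.mem_ofPred_eq] at hc
    simp [hc.1]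
  · intro l hl hl'
    rw [Finset.mem_finsuppAntidiag] at hl
    by_contra hne
    apply hl'
    have hpos : ∀ j, 1 ≤ l j := by
      intro j
      by_contra hj
      apply hne
      apply Finset.prod_eq_zero (Finset.mem_univ j)
      have : l j = 0 := by omega
      simp [timeSeries, this]
    have hle : ∀ j, l j < n + 1 := by
      intro j
      have h1 : l j ≤ Finset.univ.sum l :=
        Finset.single_le_sum (f := fun j => l j) (fun _ _ => Nat.zero_le _) (Finset.mem_univ j)
      have h2 : Finset.univ.sum l = n := hl.1
      omega
    refine ⟨fun j => ⟨l j, hle j⟩, ?_, ?_⟩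
    · have h2 : Finset.univ.sum l = n := hl.1
      simpa [h2] using hpos
    · ext j
      simp
  · intro c hc
    simp only [Finset.mem_filter, Finset.mem_univ, true_and] at hc
    refine Finset.prod_congr rfl fun j _ => ?_
    have := hc.2 j
    rw [timeSeries, PowerSeries.coeff_mk, if_neg]
    · rfl
    · simpa using (show ((c j : ℕ)) ≠ 0 by omega)

lemma pS_eq_sum_range (n : ℕ) :
    pS n = ∑ m ∈ Finset.range (n + 1), PowerSeries.coeff n (expTerm m) := by
  refine Finset.sum_congr rfl fun m _ => ?_
  rw [expTerm, PowerSeries.coeff_smul, coeff_timeSeries_pow]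

lemma coeff_expTerm_of_lt {m n : ℕ} (h : n < m) : PowerSeries.coeff n (expTerm m) = 0 := by
  have hX : PowerSeries.X ∣ timeSeries := by
    rw [PowerSeries.X_dvd_iff]
    simp [timeSeries]
  rw [expTerm, PowerSeries.coeff_smul,
    PowerSeries.X_pow_dvd_iff.1 (pow_dvd_pow_of_dvd hX m) n h, smul_zero]

lemma pS_eq_sum {n M : ℕ} (h : n < M) :
    pS n = ∑ m ∈ Finset.range M, PowerSeries.coeff n (expTerm m) := by
  rw [pS_eq_sum_range]
  refine Finset.sum_subset (fun m hm => ?_) fun m _ hm => coeff_expTerm_of_lt ?_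
  · simp only [Finset.mem_range] at hm ⊢
    omega
  · simp only [Finset.mem_range] at hm
    omega

lemma inv_factorial_succ_mul (m : ℕ) :
    ((Nat.factorial (m + 1) : ℚ))⁻¹ * ((m + 1 : ℕ) : ℚ) = (Nat.factorial m : ℚ)⁻¹ := by
  have : (Nat.factorial m : ℚ) ≠ 0 := by exact_mod_cast m.factorial_ne_zero
  rw [Nat.factorial_succ]
  push_cast
  field_simp

lemma derivative_expTerm_succ (m : ℕ) :
    PowerSeries.derivative (MvPolynomial ℕ ℚ) (expTerm (m + 1)) =
      expTerm m * PowerSeries.derivative (MvPolynomial ℕ ℚ) timeSeries := by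
  have h : PowerSeries.derivative (MvPolynomial ℕ ℚ) (expTerm (m + 1)) =
      (Nat.factorial (m + 1) : ℚ)⁻¹ •
        PowerSeries.derivative (MvPolynomial ℕ ℚ) (timeSeries ^ (m + 1)) := by
    ext1 n
    rw [expTerm, PowerSeries.coeff_derivative, PowerSeries.coeff_smul, PowerSeries.coeff_smul,
      PowerSeries.coeff_derivative, smul_mul_assoc]
  rw [h, PowerSeries.derivative_pow, expTerm, Nat.add_sub_cancel, ← inv_factorial_succ_mul m,
    mul_smul, smul_mul_assoc, mul_assoc, ← nsmul_eq_mul, smul_mul_assoc, Nat.cast_smul_eq_nsmul]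

lemma derivative_pSeries :
    PowerSeries.derivative (MvPolynomial ℕ ℚ) pSeries =
      pSeries * PowerSeries.derivative (MvPolynomial ℕ ℚ) timeSeries := by
  ext1 n
  have hterm : ∀ m, PowerSeries.coeff (n + 1) (expTerm (m + 1)) * ((n : MvPolynomial ℕ ℚ) + 1) =
      PowerSeries.coeff n
        (expTerm m * PowerSeries.derivative (MvPolynomial ℕ ℚ) timeSeries) := by
    intro m
    rw [← derivative_expTerm_succ, PowerSeries.coeff_derivative]
  have hzero : PowerSeries.coeff (n + 1) (expTerm 0) = 0 := by
    simp [expTerm, PowerSeries.coeff_one]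
  rw [PowerSeries.coeff_derivative, PowerSeries.coeff_mul, pSeries, PowerSeries.coeff_mk,
    pS_eq_sum (show n + 1 < n + 1 + 1 by omega), Finset.sum_range_succ', hzero, add_zero,
    Finset.sum_mul]
  simp only [hterm, PowerSeries.coeff_mul]
  rw [Finset.sum_comm]
  refine Finset.sum_congr rfl fun ij hij => ?_
  have : ij.1 < n + 1 := by
    have := Finset.HasAntidiagonal.mem_antidiagonal.1 hij
    omega
  rw [PowerSeries.coeff_mk, pS_eq_sum this, Finset.sum_mul]

/-- The derivation `∂/∂t_a` applied to every coefficient of a power series. -/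
noncomputable def coeffPderiv (a : ℕ) (f : PowerSeries (MvPolynomial ℕ ℚ)) :
    PowerSeries (MvPolynomial ℕ ℚ) :=
  PowerSeries.mk fun n => pderiv a (PowerSeries.coeff n f)

lemma coeffPderiv_mul (a : ℕ) (f g : PowerSeries (MvPolynomial ℕ ℚ)) :
    coeffPderiv a (f * g) = coeffPderiv a f * g + f * coeffPderiv a g := by
  ext1 n
  simp only [coeffPderiv, PowerSeries.coeff_mk, PowerSeries.coeff_mul, map_sum, map_add,
    pderiv_mul, Finset.sum_add_distrib]

lemma coeffPderiv_timeSeries {a : ℕ} (ha : 1 ≤ a) :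
    coeffPderiv a timeSeries = PowerSeries.X ^ a := by
  ext1 n
  rw [coeffPderiv, PowerSeries.coeff_mk, timeSeries, PowerSeries.coeff_mk,
    PowerSeries.coeff_X_pow]
  by_cases hn : n = 0
  · have : n ≠ a := by omega
    simp [hn, show (0 : ℕ) ≠ a by omega]
  · rw [if_neg hn, pderiv_X, Pi.single_apply]

lemma coeffPderiv_timeSeries_pow {a : ℕ} (ha : 1 ≤ a) (m : ℕ) :
    coeffPderiv a (timeSeries ^ (m + 1)) = (m + 1) • (timeSeries ^ m * PowerSeries.X ^ a) := by
  induction m with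
  | zero => simp [coeffPderiv_timeSeries ha]
  | succ m ih =>
    rw [pow_succ, coeffPderiv_mul, ih, coeffPderiv_timeSeries ha]
    simp only [nsmul_eq_mul]
    push_cast
    ring

lemma coeffPderiv_expTerm_succ {a : ℕ} (ha : 1 ≤ a) (m : ℕ) :
    coeffPderiv a (expTerm (m + 1)) = expTerm m * PowerSeries.X ^ a := by
  have h : coeffPderiv a (expTerm (m + 1)) =
      (Nat.factorial (m + 1) : ℚ)⁻¹ • coeffPderiv a (timeSeries ^ (m + 1)) := by
    ext1 n
    rw [expTerm, PowerSeries.coeff_smul, coeffPderiv, coeffPderiv, PowerSeries.coeff_mk,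
      PowerSeries.coeff_mk, PowerSeries.coeff_smul, Derivation.map_smul]
  rw [h, coeffPderiv_timeSeries_pow ha, expTerm, ← inv_factorial_succ_mul m, mul_smul,
    Nat.cast_smul_eq_nsmul, smul_mul_assoc, smul_mul_assoc]

lemma coeffPderiv_expTerm_zero (a : ℕ) : coeffPderiv a (expTerm 0) = 0 := by
  ext1 n
  rw [coeffPderiv, PowerSeries.coeff_mk, expTerm]
  simp only [Nat.factorial_zero, Nat.cast_one, inv_one, one_smul, pow_zero, map_zero,
    PowerSeries.coeff_one]
  split_ifs <;> simp

lemma pderiv_pz {a : ℕ} (ha : 1 ≤ a) (n : ℤ) : pderiv a (pz n) = pz (n - a) := by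
  by_cases hn : 0 ≤ n
  swap
  · rw [pz, if_neg hn, pz, if_neg (by omega), map_zero]
  lift n to ℕ using hn
  have key : ∀ m, pderiv a (PowerSeries.coeff n (expTerm (m + 1))) =
      PowerSeries.coeff n (expTerm m * PowerSeries.X ^ a) := by
    intro m
    rw [← coeffPderiv_expTerm_succ ha, coeffPderiv, PowerSeries.coeff_mk]
  have key0 : pderiv a (PowerSeries.coeff n (expTerm 0)) = 0 := by
    have := congrArg (PowerSeries.coeff n) (coeffPderiv_expTerm_zero a)
    rwa [coeffPderiv, PowerSeries.coeff_mk, map_zero] at this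
  rw [pz, if_pos (by omega), Int.toNat_natCast, pS_eq_sum (show n < n + 1 + 1 by omega), map_sum,
    Finset.sum_range_succ', key0, add_zero]
  simp only [key, PowerSeries.coeff_mul_X_pow']
  by_cases h : a ≤ n
  · simp only [if_pos h]
    rw [pz, if_pos (by omega), show ((n : ℤ) - a).toNat = n - a by omega,
      pS_eq_sum (show n - a < n + 1 by omega)]
  · simp only [if_neg h, Finset.sum_const_zero]
    rw [pz, if_neg (by omega)]

/-- `toPowerSums` as an algebra homomorphism. -/
noncomputable def powerSumHom (k : ℕ) : MvPolynomial ℕ ℚ →ₐ[ℚ] MvPolynomial (Fin k) ℚ :=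
  aeval (fun n : ℕ => (n : ℚ)⁻¹ • ∑ i : Fin k, X i ^ n)

lemma toPowerSums_eq (k : ℕ) (f : MvPolynomial ℕ ℚ) : toPowerSums k f = powerSumHom k f := rfl

/-- The generating series `Σ_n p_n([x_1]+⋯+[x_k]) z^n`. -/
noncomputable def completeSeries (k : ℕ) : PowerSeries (MvPolynomial (Fin k) ℚ) :=
  PowerSeries.map (powerSumHom k : MvPolynomial ℕ ℚ →+* MvPolynomial (Fin k) ℚ) pSeries

/-- The polynomial `∏_i (1 - x_i z)`. -/
noncomputable def elemPoly (k : ℕ) : Polynomial (MvPolynomial (Fin k) ℚ) :=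
  ∏ i : Fin k, (1 - Polynomial.C (X i) * Polynomial.X)

/-- The geometric series `Σ_n x^(n+1) z^n`. -/
noncomputable def geomTail {R : Type*} [CommRing R] (x : R) : PowerSeries R :=
  PowerSeries.mk fun n => x ^ (n + 1)

lemma one_sub_mul_geomTail {R : Type*} [CommRing R] (x : R) :
    (1 - PowerSeries.C x * PowerSeries.X) * geomTail x = PowerSeries.C x := by
  ext1 n
  rw [sub_mul, one_mul, mul_assoc, map_sub, PowerSeries.coeff_C_mul]
  cases n with
  | zero => simp [geomTail]
  | succ n =>
    simp [geomTail, PowerSeries.coeff_succ_X_mul, pow_succ']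

lemma derivative_prod_one_sub {R ι : Type*} [CommRing R] (x : ι → R) (s : Finset ι) :
    PowerSeries.derivative R (∏ i ∈ s, (1 - PowerSeries.C (x i) * PowerSeries.X)) =
      -((∏ i ∈ s, (1 - PowerSeries.C (x i) * PowerSeries.X)) * ∑ i ∈ s, geomTail (x i)) := by
  classical
  induction s using Finset.induction_on with
  | empty => simp
  | insert i s hi ih =>
    have h : PowerSeries.derivative R (1 - PowerSeries.C (x i) * PowerSeries.X) =
        -((1 - PowerSeries.C (x i) * PowerSeries.X) * geomTail (x i)) := by
      rw [one_sub_mul_geomTail, map_sub, PowerSeries.derivative_one, Derivation.leibniz,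
        PowerSeries.derivative_C, PowerSeries.derivative_X]
      simp
    rw [Finset.prod_insert hi, Finset.sum_insert hi, Derivation.leibniz, ih, h]
    simp only [smul_eq_mul]
    ring

lemma derivative_completeSeries (k : ℕ) :
    PowerSeries.derivative _ (completeSeries k) =
      completeSeries k * ∑ i : Fin k, geomTail (X i) := by
  have hmap : ∀ f : PowerSeries (MvPolynomial ℕ ℚ),
      PowerSeries.derivative _
        (PowerSeries.map (powerSumHom k : MvPolynomial ℕ ℚ →+* MvPolynomial (Fin k) ℚ) f) =
      PowerSeries.map (powerSumHom k : MvPolynomial ℕ ℚ →+* MvPolynomial (Fin k) ℚ)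
        (PowerSeries.derivative _ f) := by
    intro f
    ext1 n
    simp [PowerSeries.coeff_derivative]
  rw [completeSeries, hmap, derivative_pSeries, map_mul]
  congr 1
  ext1 n
  rw [PowerSeries.coeff_map, PowerSeries.coeff_derivative, timeSeries, PowerSeries.coeff_mk,
    if_neg n.succ_ne_zero, map_sum]
  simp only [geomTail, PowerSeries.coeff_mk, powerSumHom, map_mul, RingHom.coe_coe, aeval_X,
    map_add, map_natCast, map_one]
  have h : ((n : MvPolynomial (Fin k) ℚ) + 1) = algebraMap ℚ _ ((n + 1 : ℕ) : ℚ) := by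
    simp
  rw [h, mul_comm, ← Algebra.smul_def, smul_smul, mul_inv_cancel₀ (by positivity), one_smul]

lemma elemPoly_mul_completeSeries (k : ℕ) :
    (elemPoly k : PowerSeries (MvPolynomial (Fin k) ℚ)) * completeSeries k = 1 := by
  have hE : (elemPoly k : PowerSeries (MvPolynomial (Fin k) ℚ)) =
      ∏ i : Fin k, (1 - PowerSeries.C (X i) * PowerSeries.X) := by
    rw [elemPoly, ← Polynomial.coeToPowerSeries.ringHom_apply, map_prod]
    simp
  apply PowerSeries.derivative.ext
  · rw [hE, Derivation.leibniz, derivative_completeSeries, derivative_prod_one_sub,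
      PowerSeries.derivative_one]
    simp only [smul_eq_mul]
    ring
  · rw [hE, map_mul, map_prod]
    rw [completeSeries, ← PowerSeries.coeff_zero_eq_constantCoeff_apply (PowerSeries.map _ _),
      PowerSeries.coeff_map, pSeries, PowerSeries.coeff_mk]
    simp [pS]

lemma natDegree_elemPoly_le (k : ℕ) : (elemPoly k).natDegree ≤ k := by
  refine (Polynomial.natDegree_prod_le _ _).trans ?_
  refine (Finset.sum_le_card_nsmul _ _ 1 fun i _ => ?_).trans (by simp)
  compute_degree

lemma elemPoly_coeff_zero (k : ℕ) : (elemPoly k).coeff 0 = 1 := by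
  rw [elemPoly, Polynomial.coeff_zero_prod]
  simp

lemma sum_elemPoly_mul_pz {k M : ℕ} (hM : k < M) {n : ℤ} (hn : n ≠ 0) :
    ∑ r ∈ Finset.range M, powerSumHom k (pz (n - r)) * (elemPoly k).coeff r = 0 := by
  by_cases h : 0 ≤ n
  swap
  · refine Finset.sum_eq_zero fun r _ => ?_
    rw [pz, if_neg (by omega), map_zero, zero_mul]
  lift n to ℕ using h
  have hcoeff := congrArg (PowerSeries.coeff n) (elemPoly_mul_completeSeries k)
  rw [PowerSeries.coeff_one, if_neg (by exact_mod_cast hn), PowerSeries.coeff_mul,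
    Finset.Nat.sum_antidiagonal_eq_sum_range_succ_mk] at hcoeff
  have h1 : ∑ r ∈ Finset.range M, powerSumHom k (pz ((n : ℤ) - r)) * (elemPoly k).coeff r =
      ∑ r ∈ Finset.range (M + n), powerSumHom k (pz ((n : ℤ) - r)) * (elemPoly k).coeff r := by
    refine Finset.sum_subset (fun r hr => ?_) fun r _ hr => ?_
    · simp only [Finset.mem_range] at hr ⊢
      omega
    · have := natDegree_elemPoly_le k
      simp only [Finset.mem_range] at hr
      rw [Polynomial.coeff_eq_zero_of_natDegree_lt (by omega), mul_zero]
  have h2 : ∑ r ∈ Finset.range (n + 1),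
        powerSumHom k (pz ((n : ℤ) - r)) * (elemPoly k).coeff r =
      ∑ r ∈ Finset.range (M + n), powerSumHom k (pz ((n : ℤ) - r)) * (elemPoly k).coeff r := by
    refine Finset.sum_subset (fun r hr => ?_) fun r _ hr => ?_
    · simp only [Finset.mem_range] at hr ⊢
      omega
    · simp only [Finset.mem_range] at hr
      rw [pz, if_neg (by omega), map_zero, zero_mul]
  rw [h1, ← h2, ← hcoeff]
  refine Finset.sum_congr rfl fun r hr => ?_
  have hr' : r < n + 1 := Finset.mem_range.1 hr
  rw [Polynomial.coeff_coe, completeSeries, PowerSeries.coeff_map, pSeries, PowerSeries.coeff_mk,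
    pz, if_pos (by omega), show ((n : ℤ) - r).toNat = n - r by omega, mul_comm]
  rfl

/-- The determinant `det(p_{l_i - (g - j)})`, the Schur function in terms of the strictly
decreasing sequence `l_i = λ_i + g - i`. -/
noncomputable def betaDet {g : ℕ} (l : Fin g → ℤ) : MvPolynomial ℕ ℚ :=
  Matrix.det (Matrix.of fun a b : Fin g => pz (l a - (g - 1 - (b : ℕ) : ℤ)))

lemma schur_eq_betaDet {g : ℕ} (mu : Fin g → ℕ) :
    schur mu = betaDet fun a => (mu a : ℤ) + (g - 1 - (a : ℕ) : ℤ) := by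
  rw [schur, betaDet]
  congr 1
  ext1 a b
  simp only [Matrix.of_apply]
  congr 1
  ring

lemma pderiv_prod {ι : Type*} [DecidableEq ι] (a : ℕ) (s : Finset ι)
    (f : ι → MvPolynomial ℕ ℚ) :
    pderiv a (∏ i ∈ s, f i) = ∑ i ∈ s, pderiv a (f i) * ∏ j ∈ s.erase i, f j := by
  induction s using Finset.induction_on with
  | empty => simp
  | insert i s hi ih =>
    rw [Finset.prod_insert hi, pderiv_mul, ih, Finset.sum_insert hi, Finset.erase_insert hi,
      Finset.mul_sum]
    congr 1
    refine Finset.sum_congr rfl fun j hj => ?_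
    have hij : i ≠ j := fun h => hi (h ▸ hj)
    rw [Finset.erase_insert_of_ne hij, Finset.prod_insert (by simp [hi])]
    ring

lemma pderiv_det {n : Type*} [Fintype n] [DecidableEq n] (a : ℕ)
    (M : Matrix n n (MvPolynomial ℕ ℚ)) :
    pderiv a M.det = ∑ i, (M.updateRow i fun j => pderiv a (M i j)).det := by
  have hcol : ∀ M : Matrix n n (MvPolynomial ℕ ℚ),
      pderiv a M.det = ∑ i, (M.updateCol i fun j => pderiv a (M j i)).det := by
    intro M
    simp only [Matrix.det_apply]
    rw [map_sum, Finset.sum_comm]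
    refine Finset.sum_congr rfl fun σ _ => ?_
    rw [← Finset.smul_sum, Units.smul_def, Units.smul_def, map_zsmul, pderiv_prod]
    congr 1
    refine Finset.sum_congr rfl fun i _ => ?_
    rw [← Finset.mul_prod_erase _ _ (Finset.mem_univ i), Matrix.updateCol_self]
    congr 1
    refine Finset.prod_congr rfl fun j hj => ?_
    rw [Matrix.updateCol_ne (Finset.ne_of_mem_erase hj)]
  rw [← Matrix.det_transpose, hcol]
  refine Finset.sum_congr rfl fun i _ => ?_
  rw [← Matrix.det_transpose, Matrix.updateCol_transpose, Matrix.transpose_transpose]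
  rfl

lemma pderiv_betaDet {g a : ℕ} (ha : 1 ≤ a) (l : Fin g → ℤ) :
    pderiv a (betaDet l) = ∑ i, betaDet (Function.update l i (l i - a)) := by
  rw [betaDet, pderiv_det]
  refine Finset.sum_congr rfl fun i _ => ?_
  rw [betaDet]
  congr 1
  ext1 b c
  by_cases hb : b = i
  · subst hb
    simp only [Matrix.updateRow_self, Matrix.of_apply, Function.update_self, pderiv_pz ha]
    congr 1
    ring
  · simp [Matrix.updateRow_ne hb, Function.update_of_ne hb]

lemma powerSumHom_betaDet_eq_zero {g k c : ℕ} (hc : c + k < g) (l : Fin g → ℤ)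
    (hl : ∀ i, l i ≠ c) : powerSumHom k (betaDet l) = 0 := by
  rw [betaDet, AlgHom.map_det]
  refine Matrix.exists_mulVec_eq_zero_iff.1
    ⟨fun b => if c ≤ g - 1 - (b : ℕ) then (elemPoly k).coeff (g - 1 - (b : ℕ) - c) else 0,
      fun h => ?_, ?_⟩
  · have := congrFun h ⟨g - 1 - c, by omega⟩
    simp only [Pi.zero_apply] at this
    rw [if_pos (by omega), show g - 1 - (g - 1 - c) - c = 0 by omega, elemPoly_coeff_zero] at this
    exact one_ne_zero this
  · funext a
    simp only [Matrix.mulVec, dotProduct, Pi.zero_apply, AlgHom.mapMatrix_apply, Matrix.map_apply,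
      Matrix.of_apply]
    have hreflect : ∑ b : Fin g, powerSumHom k (pz (l a - (g - 1 - (b : ℕ) : ℤ))) *
          (if c ≤ g - 1 - (b : ℕ) then (elemPoly k).coeff (g - 1 - (b : ℕ) - c) else 0) =
        ∑ s ∈ Finset.range g, powerSumHom k (pz (l a - s)) *
          (if c ≤ s then (elemPoly k).coeff (s - c) else 0) := by
      rw [← Finset.sum_range_reflect, ← Fin.sum_univ_eq_sum_range
        (fun j => powerSumHom k (pz (l a - (g - 1 - j : ℕ))) *
          (if c ≤ g - 1 - j then (elemPoly k).coeff (g - 1 - j - c) else 0))]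
      refine Finset.sum_congr rfl fun b _ => ?_
      have := b.isLt
      rw [show ((g - 1 - (b : ℕ) : ℕ) : ℤ) = (g : ℤ) - 1 - (b : ℕ) by omega]
    rw [hreflect, show g = c + (g - c) by omega, Finset.sum_range_add,
      Finset.sum_eq_zero, zero_add,
      ← sum_elemPoly_mul_pz (show k < g - c by omega) (sub_ne_zero.2 (hl a))]
    · refine Finset.sum_congr rfl fun r _ => ?_
      rw [if_pos (by omega), Nat.add_sub_cancel_left]
      congr 3
      push_cast
      ring
    · intro s hs
      have := Finset.mem_range.1 hs
      rw [if_neg (by omega), mul_zero]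

lemma derivs_concat (L : List ℕ) (a : ℕ) (f : MvPolynomial ℕ ℚ) :
    derivs (L ++ [a]) f = derivs L (pderiv a f) := by
  simp [derivs]

lemma derivs_sum {ι : Type*} (L : List ℕ) (s : Finset ι) (f : ι → MvPolynomial ℕ ℚ) :
    derivs L (∑ i ∈ s, f i) = ∑ i ∈ s, derivs L (f i) := by
  induction L with
  | nil => rfl
  | cons a L ih =>
    change pderiv a (derivs L _) = ∑ i ∈ s, pderiv a (derivs L (f i))
    rw [ih, map_sum]

/-- Each derivative changes one entry of `l`, so `L.length` derivatives cannot make all of the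
values in `C` appear if more than `L.length` of them are missing. -/
lemma powerSumHom_derivs_betaDet_eq_zero {g k : ℕ} (L : List ℕ) (hL : ∀ a ∈ L, 1 ≤ a)
    (l : Fin g → ℤ) (C : Finset ℤ) (hC : ∀ c ∈ C, 0 ≤ c ∧ c + k < g)
    (hl : ∀ c ∈ C, ∀ i, l i ≠ c) (hcard : L.length < C.card) :
    powerSumHom k (derivs L (betaDet l)) = 0 := by
  induction L using List.reverseRecOn generalizing l C with
  | nil =>
    obtain ⟨c, hc⟩ := Finset.card_pos.1 hcard
    obtain ⟨h0, h1⟩ := hC c hc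
    lift c to ℕ using h0
    exact powerSumHom_betaDet_eq_zero (by omega) l (hl _ hc)
  | append_singleton L a ih =>
    rw [derivs_concat, pderiv_betaDet (hL a (by simp)), derivs_sum, map_sum]
    refine Finset.sum_eq_zero fun i _ => ?_
    refine ih (fun b hb => hL b (by simp [hb])) _ (C.erase (l i - a))
      (fun c hc => hC c (Finset.mem_of_mem_erase hc)) (fun c hc j => ?_) ?_
    · obtain ⟨hne, hc⟩ := Finset.mem_erase.1 hc
      by_cases hj : j = i
      · subst hj
        rw [Function.update_self]
        exact hne.symm
      · rw [Function.update_of_ne hj]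
        exact hl c hc j
    · have := Finset.pred_card_le_card_erase (s := C) (a := l i - a)
      rw [List.length_append, List.length_singleton] at hcard
      omega

/-- The sequence `l_0, …, l_{k+n-1}, v_n, v_{n+1}, …`. -/
def spliced (g k n : ℕ) (l v : ℕ → ℤ) : Fin g → ℤ :=
  fun a => if (a : ℕ) < k + n then l a else v (a - k)

lemma powerSumHom_derivs_spliced {g k N m : ℕ} (hg : k + N = g) (hm : m ≤ N) {l v : ℕ → ℤ}
    {a : ℕ → ℕ} (hv : ∀ j < N, 0 ≤ v j ∧ v j < N)
    (hvinj : ∀ i < N, ∀ j < N, v i = v j → i = j)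
    (hvmono : ∀ i j, i ≤ j → j < m → v i ≤ v j)
    (hlanti : ∀ i j, i < j → j < k + m → l j < l i)
    (hlN : ∀ n < m, N ≤ l (k + n)) (ha : ∀ n < m, (a n : ℤ) = l (k + n) - v n)
    {n : ℕ} (hn : n ≤ m) :
    powerSumHom k (derivs ((List.range n).map a) (betaDet (spliced g k n l v))) =
      powerSumHom k (betaDet (spliced g k 0 l v)) := by
  have ha1 : ∀ n < m, 1 ≤ a n := by
    intro n hn
    have h1 := ha n hn
    have h2 := hlN n hn
    have h3 := hv n (by omega)
    omega
  induction n with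
  | zero => rfl
  | succ n ih =>
    have hnm : n < m := by omega
    have hlarge : ∀ i, i < k + (n + 1) → N ≤ l i := by
      intro i hi
      rcases eq_or_ne i (k + n) with rfl | h
      · exact hlN n hnm
      · have := hlanti i (k + n) (by omega) (by omega)
        have := hlN n hnm
        omega
    have hL : ∀ b ∈ (List.range n).map a, 1 ≤ b := by
      intro b hb
      obtain ⟨j, hj, rfl⟩ := List.mem_map.1 hb
      have := List.mem_range.1 hj
      exact ha1 j (by omega)
    rw [List.range_succ, List.map_append, List.map_singleton, derivs_concat,
      pderiv_betaDet (ha1 n hnm), derivs_sum, map_sum,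
      Finset.sum_eq_single (⟨k + n, by omega⟩ : Fin g) _ (by simp), ← ih (by omega)]
    · congr 4
      funext b
      by_cases hb : b = ⟨k + n, by omega⟩
      · subst hb
        rw [Function.update_self, ha n hnm]
        simp [spliced]
      · have hb' : (b : ℕ) ≠ k + n := fun h => hb (Fin.ext h)
        rw [Function.update_of_ne hb, spliced, spliced]
        by_cases h : (b : ℕ) < k + n
        · rw [if_pos h, if_pos (by omega)]
        · rw [if_neg h, if_neg (by omega)]
    · intro i _ hi
      have hi' : (i : ℕ) ≠ k + n := fun h => hi (Fin.ext h)
      have hne : ∀ j < N, ∀ b : Fin g, ((b : ℕ) < k + (n + 1) ∨ (b : ℕ) ≠ k + j) →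
          spliced g k (n + 1) l v b ≠ v j := by
        intro j hj b hb heq
        rw [spliced] at heq
        split_ifs at heq with h
        · have := hlarge b h
          have := (hv j hj).2
          omega
        · have hbg := b.isLt
          have := hvinj _ (by omega) _ hj heq
          omega
      have hcard : ∀ s : Finset ℕ, (∀ j ∈ s, j < N) → (s.image v).card = s.card := fun s hs =>
        Finset.card_image_of_injOn fun x hx y hy h => hvinj x (hs x hx) y (hs y hy) h
      have hbounds : ∀ j < N, 0 ≤ v j ∧ v j + k < g := by
        intro j hj
        have := hv j hj
        omega
      by_cases hik : (i : ℕ) < k + (n + 1)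
      · refine powerSumHom_derivs_betaDet_eq_zero _ hL _ ((Finset.range (n + 1)).image v) ?_ ?_ ?_
        · simp only [Finset.mem_image, Finset.mem_range]
          rintro _ ⟨j, hj, rfl⟩
          exact hbounds j (by omega)
        · simp only [Finset.mem_image, Finset.mem_range]
          rintro _ ⟨j, hj, rfl⟩ b
          by_cases hb : b = i
          · subst hb
            rw [Function.update_self, spliced, if_pos hik, ha n hnm]
            have := hlanti b (k + n) (by omega) (by omega)
            have := hvmono j n (by omega) hnm
            omega
          · rw [Function.update_of_ne hb]
            exact hne j (by omega) b (by omega)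
        · rw [hcard _ fun j hj => by have := Finset.mem_range.1 hj; omega]
          simp
      · have hig := i.isLt
        have hsN : ∀ j ∈ insert ((i : ℕ) - k) (Finset.range (n + 1)), j < N := by
          intro j hj
          rw [Finset.mem_insert, Finset.mem_range] at hj
          omega
        refine powerSumHom_derivs_betaDet_eq_zero _ hL _
          (((insert ((i : ℕ) - k) (Finset.range (n + 1))).image v).erase
            (spliced g k (n + 1) l v i - a n)) ?_ ?_ ?_
        · intro c hc
          obtain ⟨j, hj, rfl⟩ := Finset.mem_image.1 (Finset.mem_of_mem_erase hc)
          exact hbounds j (hsN j hj)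
        · intro c hc b
          obtain ⟨hc1, hc⟩ := Finset.mem_erase.1 hc
          obtain ⟨j, hj, rfl⟩ := Finset.mem_image.1 hc
          by_cases hb : b = i
          · subst hb
            rw [Function.update_self]
            exact hc1.symm
          · have hb' : (b : ℕ) ≠ i := fun h => hb (Fin.ext h)
            rw [Function.update_of_ne hb]
            refine hne j (hsN j hj) b ?_
            rw [Finset.mem_insert, Finset.mem_range] at hj
            omega
        · refine lt_of_lt_of_le ?_ Finset.pred_card_le_card_erase
          rw [hcard _ hsN, Finset.card_insert_of_notMem (by rw [Finset.mem_range]; omega)]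
          simp

lemma betaDet_spliced_zero {g k N : ℕ} (hg : k + N = g) (mu : Fin k → ℕ) {l v : ℕ → ℤ}
    (hl : ∀ a : Fin k, l a = (mu a : ℤ) + (g - 1 - (a : ℕ) : ℤ))
    (π : Equiv.Perm (Fin N)) (hv : ∀ j : Fin N, v j = N - 1 - (π j : ℕ)) :
    betaDet (spliced g k 0 l v) = ((Equiv.Perm.sign π : ℤ) : MvPolynomial ℕ ℚ) * schur mu := by
  subst hg
  set B : Matrix (Fin k) (Fin N) (MvPolynomial ℕ ℚ) :=
    Matrix.of fun a b => pz ((mu a : ℤ) - (a : ℕ) + (k + (b : ℕ)))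
  set D : Matrix (Fin N) (Fin N) (MvPolynomial ℕ ℚ) :=
    Matrix.of fun a b => pz ((b : ℤ) - (a : ℕ))
  have hD : D.det = 1 := by
    rw [Matrix.det_of_isUpperTriangular]
    · simp [D, pz, pS]
    · intro i j hij
      have : (j : ℕ) < i := hij
      simp only [D, Matrix.of_apply]
      rw [pz, if_neg (by omega)]
  have hM : (Matrix.of fun a b : Fin (k + N) =>
        pz (spliced (k + N) k 0 l v a - (((k + N : ℕ) : ℤ) - 1 - (b : ℕ)))).submatrix
        finSumFinEquiv finSumFinEquiv =
      (Matrix.fromBlocks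
        (Matrix.of fun a b : Fin k => pz ((mu a : ℤ) - ((a : ℕ) : ℤ) + ((b : ℕ) : ℤ)))
        B 0 D).submatrix (Equiv.sumCongr 1 π) id := by
    ext1 a b
    rcases a with a | a <;> rcases b with b | b
    · simp only [Matrix.submatrix_apply, Matrix.of_apply, finSumFinEquiv_apply_left, spliced,
        Fin.val_castAdd, add_zero, a.isLt, if_true, hl, Equiv.sumCongr_apply, Sum.map_inl, id,
        Matrix.fromBlocks_apply₁₁, Equiv.Perm.one_apply]
      congr 1
      ring
    · simp only [Matrix.submatrix_apply, Matrix.of_apply, finSumFinEquiv_apply_left,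
        finSumFinEquiv_apply_right, Fin.val_natAdd, spliced, B,
        Fin.val_castAdd, add_zero, a.isLt, if_true, hl, Equiv.sumCongr_apply, Sum.map_inl, id,
        Matrix.fromBlocks_apply₁₂, Equiv.Perm.one_apply]
      congr 1
      push_cast
      ring
    · simp only [Matrix.submatrix_apply, Matrix.of_apply, finSumFinEquiv_apply_left,
        finSumFinEquiv_apply_right, Fin.val_natAdd, spliced,
        Fin.val_castAdd, add_zero, not_lt.2 (Nat.le_add_right k a), if_false,
        Nat.add_sub_cancel_left, hv, Equiv.sumCongr_apply, Sum.map_inr, id,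
        Matrix.fromBlocks_apply₂₁, Matrix.zero_apply]
      have := b.isLt
      rw [pz, if_neg (by push_cast; omega)]
    · simp only [Matrix.submatrix_apply, Matrix.of_apply,
        finSumFinEquiv_apply_right, Fin.val_natAdd, spliced, D,
        add_zero, not_lt.2 (Nat.le_add_right k a), if_false,
        Nat.add_sub_cancel_left, hv, Equiv.sumCongr_apply, Sum.map_inr, id,
        Matrix.fromBlocks_apply₂₂]
      congr 1
      push_cast
      ring
  rw [betaDet, ← Matrix.det_submatrix_equiv_self finSumFinEquiv, hM]
  have hperm := Matrix.det_permute (Equiv.Perm.sumCongr (1 : Equiv.Perm (Fin k)) π)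
    (Matrix.fromBlocks
        (Matrix.of fun a b : Fin k => pz ((mu a : ℤ) - ((a : ℕ) : ℤ) + ((b : ℕ) : ℤ)))
        B 0 D)
  refine hperm.trans ?_
  rw [Matrix.det_fromBlocks_zero₂₁, hD, mul_one, Equiv.Perm.sign_sumCongr, map_one, one_mul]
  rfl

lemma wseq_eq_nth (G : Finset ℕ) (i : ℕ) : wseq G i = Nat.nth (· ∈ G) i := by
  have hf : (Set.ofPred (· ∈ G)).Finite := G.finite_toSet
  have hG : hf.toFinset = G := by
    ext x
    simp
  rw [wseq, Nat.nth_eq_getD_sort hf, hG]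

lemma card_toFinset_ofPred_mem (G : Finset ℕ) (hf : (Set.ofPred (· ∈ G)).Finite) :
    hf.toFinset.card = G.card := by
  congr 1
  ext x
  simp

lemma le_wseq {G : Finset ℕ} {i : ℕ} (hi : i < G.card) : i ≤ wseq G i := by
  rw [wseq_eq_nth]
  exact Nat.le_nth fun hf => (card_toFinset_ofPred_mem G hf).symm ▸ hi

lemma count_mem_add_gapm (G : Finset ℕ) (g k : ℕ) :
    Nat.count (· ∈ G) (g - k) + gapm G g k = g - k := by
  rw [gapm, Nat.count_eq_card_filter_range, Finset.card_filter_add_card_filter_not,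
    Finset.card_range]

lemma wseq_lt {G : Finset ℕ} {g k i : ℕ} (hi : i + gapm G g k < g - k) : wseq G i < g - k := by
  rw [wseq_eq_nth]
  have := count_mem_add_gapm G g k
  exact Nat.nth_lt_of_lt_count (by omega)

lemma le_wseq_of_le {G : Finset ℕ} {g k i : ℕ} (hi : g - k ≤ i + gapm G g k) (hG : i < G.card) :
    g - k ≤ wseq G i := by
  by_contra! hlt
  rw [wseq_eq_nth] at hlt
  have hfin : ∀ hf : (Set.ofPred (· ∈ G)).Finite, i < hf.toFinset.card :=
    fun hf => (card_toFinset_ofPred_mem G hf).symm ▸ hG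
  have h1 := Nat.count_strict_mono (Nat.nth_mem i hfin) hlt
  rw [Nat.count_nth hfin] at h1
  have := count_mem_add_gapm G g k
  omega

lemma wstar_lt {G : Finset ℕ} {g k j : ℕ} (hj : j < gapm G g k) : wstar G j < g - k := by
  rw [gapm, ← Nat.count_eq_card_filter_range] at hj
  exact Nat.nth_lt_of_lt_count hj

lemma wstar_mono (G : Finset ℕ) : Monotone (wstar G) := by
  refine Nat.nth_monotone ?_
  exact G.finite_toSet.infinite_compl

/-- Let `λ` be the partition associated to a gap sequence `G` of genus `g`,
`0 ≤ k ≤ g-1`, and `μ = (μ_1,...,μ_g)` any partition with `μ_i = λ_i` for `k+1 ≤ i ≤ g`.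
Then `∂_{a^{(k)}_1} ⋯ ∂_{a^{(k)}_{m_k}} s_μ` at `t = [x_1]+⋯+[x_k]` equals
`c_k · s_{(μ_1,...,μ_k)}([x_1]+⋯+[x_k])` with the same sign `c_k` as in the previous
statement (encoded by the permutation `π` with `π j = g-k-1 - v_j`). -/
theorem statement9 (g : ℕ) (hg : 1 ≤ g) (G : Finset ℕ)
    (hcard : G.card = g) (h0 : 0 ∉ G)
    (hadd : ∀ a b : ℕ, a ∉ G → b ∉ G → a + b ∉ G)
    (k : ℕ) (hk : k < g)
    (mu : Fin g → ℕ) (hmu : Antitone mu)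
    (hmueq : ∀ a : Fin g, k ≤ (a : ℕ) → mu a = gapPart G g a)
    (π : Equiv.Perm (Fin (g - k)))
    (hπ : ∀ j : Fin (g - k), ((π j : ℕ))
        = g - k - 1 - (if (j : ℕ) < gapm G g k then wstar G j
            else wseq G (g - k - (j : ℕ) - 1))) :
    toPowerSums k (derivs ((List.range (gapm G g k)).map (gapa G g k)) (schur mu))
      = ((Equiv.Perm.sign π : ℤ) : ℚ)
          • toPowerSums k (schur (fun a : Fin k => pad mu a)) := by
  have hm := count_mem_add_gapm G g k
  set m := gapm G g k
  set l : ℕ → ℤ := fun a => (pad mu a : ℤ) + (g - 1 - a : ℤ) with hl_def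
  set v : ℕ → ℤ := fun j => if j < m then (wstar G j : ℤ) else wseq G (g - k - j - 1) with hv_def
  have hlw : ∀ a, k ≤ a → a < g → l a = wseq G (g - 1 - a) := by
    intro a hka hag
    have := le_wseq (G := G) (i := g - 1 - a) (by omega)
    simp only [hl_def, pad, dif_pos hag, hmueq ⟨a, hag⟩ hka, gapPart]
    omega
  have hv : ∀ j < g - k, 0 ≤ v j ∧ v j < (g - k : ℕ) := by
    intro j hj
    simp only [hv_def]
    split_ifs with h
    · have := wstar_lt h
      omega
    · have := wseq_lt (G := G) (g := g) (k := k) (i := g - k - j - 1) (by omega)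
      omega
  have hvπ : ∀ j : Fin (g - k), v j = (g - k : ℕ) - 1 - (π j : ℕ) := by
    intro j
    have h1 := hv j j.isLt
    have h2 := hπ j
    simp only [hv_def] at h1 ⊢
    split_ifs at h1 h2 ⊢ <;> omega
  have hvinj : ∀ i < g - k, ∀ j < g - k, v i = v j → i = j := by
    intro i hi j hj h
    have h1 := hvπ ⟨i, hi⟩
    have h2 := hvπ ⟨j, hj⟩
    simp only at h1 h2
    have : π ⟨i, hi⟩ = π ⟨j, hj⟩ := Fin.ext (by omega)
    simpa using π.injective this
  have hstart : (fun a : Fin g => (mu a : ℤ) + (g - 1 - (a : ℕ) : ℤ)) = spliced g k m l v := by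
    funext a
    have hag := a.isLt
    rw [spliced]
    split_ifs with h
    · simp [hl_def, pad]
    · have h1 := hlw a (by omega) hag
      simp only [hl_def, pad, dif_pos hag] at h1
      simp only [hv_def]
      rw [h1, if_neg (by omega)]
      congr 2
      omega
  have hmain := powerSumHom_derivs_spliced (g := g) (k := k) (N := g - k) (m := m) (l := l) (v := v)
    (a := gapa G g k) (by omega) (by omega) hv hvinj ?_ ?_ ?_ ?_ le_rfl
  · rw [toPowerSums_eq, toPowerSums_eq, schur_eq_betaDet, hstart, hmain,
      betaDet_spliced_zero (by omega) (fun a : Fin k => pad mu a) (fun a => rfl) π hvπ,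
      map_mul, map_intCast, Algebra.smul_def, map_intCast]
  · intro i j hij hj
    simp only [hv_def]
    rw [if_pos (by omega), if_pos hj]
    exact_mod_cast wstar_mono G hij
  · intro i j hij hj
    have hanti : mu ⟨j, by omega⟩ ≤ mu ⟨i, by omega⟩ := hmu hij.le
    simp only [hl_def, pad]
    rw [dif_pos (by omega), dif_pos (by omega)]
    omega
  · intro n hn
    rw [hlw _ (by omega) (by omega)]
    exact_mod_cast le_wseq_of_le (G := G) (g := g) (k := k) (by omega) (by omega)
  · intro n hn
    have h1 := le_wseq_of_le (G := G) (g := g) (k := k) (i := g - 1 - (k + n))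
      (by omega) (by omega)
    have h2 := wstar_lt hn
    rw [hlw _ (by omega) (by omega)]
    simp only [hv_def, if_pos hn, gapa]
    rw [show g - k - n - 1 = g - 1 - (k + n) by omega]
    omega
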